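/- Let A ⊆ B be an inclusion of C*-algebras. Then the following are equivalent: (i) every nonzero positive element of A is full and properly infinite in B; (ii) for every nonzero positive element a ∈ A, the hereditary C*-subalgebra cl(aBa), the norm closure of {a·b·a : b ∈ B}, contains a projection that is full and properly infinite in B. -/

import Mathlib

open Filter Topology

section Defs

variable {B : Type*} [NonUnitalNormedRing B] [StarRing B] [PartialOrder B]

/-- A projection in a C*-algebra: a self-adjoint idempotent. -/
def IsProjection (p : B) : Prop := star p = p ∧ p * p = p

/-- The hereditary subalgebra `cl(a·S·a)`: the norm closure of `{a * b * a : b ∈ S}`. -/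
def herSub (S : Set B) (a : B) : Set B := closure {x : B | ∃ b ∈ S, x = a * b * a}

/-- `T` has an approximate unit of projections. -/
def HasApproxUnitOfProjections (T : Set B) : Prop :=
  ∀ x ∈ T, 0 ≤ x → ∀ ε : ℝ, 0 < ε → ∃ p ∈ T, IsProjection p ∧ ‖p * x - x‖ < ε

/-- The inclusion `A ⊆ S` of C*-algebras has real rank zero. -/
def InclusionRealRankZero (A S : Set B) : Prop :=
  ∀ a ∈ A, 0 ≤ a → a ≠ 0 → HasApproxUnitOfProjections (herSub S a)

end Defs

section Infinite

variable {B : Type*} [NonUnitalCStarAlgebra B] [PartialOrder B] [StarOrderedRing B]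

/-- An element `b` of a C*-algebra `B` is full if the closed two-sided ideal of `B`
generated by `b` is all of `B`. -/
def IsFullIn (b : B) : Prop :=
  ∀ J : TwoSidedIdeal B, IsClosed (J : Set B) → b ∈ J → ∀ x : B, x ∈ J

/-- Cuntz subequivalence: `a ≾ b` if `a = lim xₙ * b * xₙ*`. -/
def CuntzSubequiv {R : Type*} [NonUnitalRing R] [StarRing R] [TopologicalSpace R]
    (a b : R) : Prop :=
  ∃ x : ℕ → R, Tendsto (fun n => x n * b * star (x n)) atTop (nhds a)

/-- A nonzero positive element `b` of a C*-algebra is properly infinite if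
`diag(b, b) ≾ diag(b, 0)` in `M₂(B)`. -/
def ProperlyInfinite (b : B) : Prop :=
  b ≠ 0 ∧ 0 ≤ b ∧
    CuntzSubequiv (R := Matrix (Fin 2) (Fin 2) B)
      (Matrix.diagonal ![b, b]) (Matrix.diagonal ![b, 0])

end Infinite

section ConjClosure

open scoped CStarAlgebra

variable {B : Type*} [NonUnitalCStarAlgebra B]

/-- The elements that are Cuntz subequivalent to `b`, as a closure. -/
def conjClosure (b : B) : Set B := closure (Set.range fun u : B => u * b * star u)

/-- The triples `(x b x*, y b y*, x b y*)`. The rows `(x, y)` witness that a diagonal matrix is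
Cuntz subequivalent to `diag(b, 0)`. -/
def conjTriples (b : B) : Set (B × B × B) :=
  Set.range fun z : B × B => (z.1 * b * star z.1, z.2 * b * star z.2, z.1 * b * star z.2)

lemma cuntzSubequiv_diagonal_iff (d : B) {b : B} (hb : IsSelfAdjoint b) :
    CuntzSubequiv (R := Matrix (Fin 2) (Fin 2) B)
      (Matrix.diagonal ![d, d]) (Matrix.diagonal ![b, 0]) ↔
      ((d, d, 0) : B × B × B) ∈ closure (conjTriples b) := by
  have key (X : Matrix (Fin 2) (Fin 2) B) (i j : Fin 2) :
      (X * Matrix.diagonal ![b, 0] * star X) i j = X i 0 * b * star (X j 0) := by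
    simp [Matrix.mul_apply, Matrix.star_apply, Fin.sum_univ_two, Matrix.diagonal_apply]
  rw [mem_closure_iff_seq_limit]
  constructor
  · rintro ⟨X, hX⟩
    have h (i j : Fin 2) := (tendsto_pi_nhds.1 ((tendsto_pi_nhds.1 hX) i)) j
    refine ⟨fun n => _, fun n => ⟨(X n 0 0, X n 1 0), rfl⟩, ?_⟩
    refine Tendsto.prodMk_nhds ?_ (Tendsto.prodMk_nhds ?_ ?_)
    · simpa [key] using h 0 0
    · simpa [key] using h 1 1
    · simpa [key] using h 0 1
  · rintro ⟨z, hz, hlim⟩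
    choose x hx using hz
    obtain rfl : _ = z := funext hx
    have h1 := (continuous_fst.tendsto _).comp hlim
    have h2 := ((continuous_fst.comp continuous_snd).tendsto _).comp hlim
    have h3 := ((continuous_snd.comp continuous_snd).tendsto _).comp hlim
    have h4 := (continuous_star.tendsto _).comp h3
    refine ⟨fun n => !![(x n).1, 0; (x n).2, 0], ?_⟩
    refine tendsto_pi_nhds.2 fun i => tendsto_pi_nhds.2 fun j => ?_
    simp only [key]
    fin_cases i <;> fin_cases j
    · simpa [Function.comp_def] using h1
    · simpa [Function.comp_def] using h3
    · simpa [Function.comp_def, hb.star_eq, mul_assoc] using h4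
    · simpa [Function.comp_def] using h2

lemma conj_mem_conjClosure {b d : B} (hd : d ∈ conjClosure b) (w : B) :
    w * d * star w ∈ conjClosure b := by
  refine map_mem_closure (f := fun t => w * t * star w) (by fun_prop) hd ?_
  rintro _ ⟨u, rfl⟩
  exact ⟨w * u, by simp [mul_assoc]⟩

lemma conjClosure_subset {b d : B} (hd : d ∈ conjClosure b) :
    conjClosure d ⊆ conjClosure b := by
  refine closure_minimal ?_ isClosed_closure
  rintro _ ⟨w, rfl⟩
  exact conj_mem_conjClosure hd w

lemma closure_conjTriples_subset {b d : B} (hd : d ∈ conjClosure b) :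
    closure (conjTriples d) ⊆ closure (conjTriples b) := by
  refine closure_minimal ?_ isClosed_closure
  rintro _ ⟨z, rfl⟩
  refine map_mem_closure
    (f := fun t => (z.1 * t * star z.1, z.2 * t * star z.2, z.1 * t * star z.2))
    (by fun_prop) hd ?_
  rintro _ ⟨u, rfl⟩
  exact ⟨(z.1 * u, z.2 * u), by simp [mul_assoc]⟩

lemma triple_mem_of_mem_conjClosure {b d : B}
    (hb : ((b, b, 0) : B × B × B) ∈ closure (conjTriples b)) (hd : d ∈ conjClosure b) :
    ((d, d, 0) : B × B × B) ∈ closure (conjTriples b) := by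
  refine closure_minimal (s := Set.range fun u : B => u * b * star u)
    (t := (fun t : B => (t, t, (0 : B))) ⁻¹' closure (conjTriples b)) ?_
    (isClosed_closure.preimage (by fun_prop)) hd
  rintro _ ⟨u, rfl⟩
  have := map_mem_closure
    (f := fun t : B × B × B => (u * t.1 * star u, u * t.2.1 * star u, u * t.2.2 * star u))
    (t := conjTriples b) (by fun_prop) hb ?_
  · simpa using this
  · rintro _ ⟨z, rfl⟩
    exact ⟨(u * z.1, u * z.2), by simp [mul_assoc]⟩

lemma add_mem_conjClosure {b c d : B} (hb : IsSelfAdjoint b)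
    (hbb : ((b, b, 0) : B × B × B) ∈ closure (conjTriples b))
    (hc : c ∈ conjClosure b) (hd : d ∈ conjClosure b) : c + d ∈ conjClosure b := by
  refine closure_closure.subset (map_mem_closure₂ continuous_add hc hd ?_)
  rintro _ ⟨u, rfl⟩ _ ⟨v, rfl⟩
  have := map_mem_closure
    (f := fun t : B × B × B => u * t.1 * star u + v * t.2.1 * star v + u * t.2.2 * star v
      + v * star t.2.2 * star u) (t := Set.range fun u : B => u * b * star u) (by fun_prop) hbb ?_
  · simpa using this
  · rintro _ ⟨z, rfl⟩
    refine ⟨u * z.1 + v * z.2, ?_⟩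
    simp only [star_add, star_mul, mul_add, add_mul, mul_assoc, hb.star_eq, star_star]
    abel

lemma smul_mem_conjClosure {b d : B} (hd : d ∈ conjClosure b) {r : ℝ} (hr : 0 ≤ r) :
    r • d ∈ conjClosure b := by
  refine map_mem_closure (f := fun t => r • t) (by fun_prop) hd ?_
  rintro _ ⟨u, rfl⟩
  refine ⟨Real.sqrt r • u, ?_⟩
  simp [smul_mul_assoc, mul_smul_comm, smul_smul, Real.mul_self_sqrt hr]

lemma mem_conjClosure_of_forall_exists {a b : B}
    (h : ∀ ε > 0, ∃ d ∈ conjClosure b, ‖d - a‖ < ε) : a ∈ conjClosure b := by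
  refine closure_closure.subset (Metric.mem_closure_iff.2 fun ε hε => ?_)
  obtain ⟨d, hd, hda⟩ := h ε hε
  exact ⟨d, hd, by rwa [dist_comm, dist_eq_norm]⟩

end ConjClosure

section Order

open scoped CStarAlgebra

lemma Unitization.eq_inr_of_fst_eq_zero {R A : Type*} [Zero A] [Zero R] {x : Unitization R A}
    (hx : x.fst = 0) : x = (x.snd : Unitization R A) := by
  ext <;> simp [hx]

lemma exists_conj_eq_smul {U : Type*} [CStarAlgebra U] [PartialOrder U] [StarOrderedRing U]
    {b : U} (hb : 0 ≤ b) {δ : ℝ} (hδ : 0 < δ) :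
    ∃ g : U, IsSelfAdjoint g ∧ g * g ≤ 1 ∧ g * b * g = δ • (1 - g * g) := by
  have hsp : ∀ x ∈ spectrum ℝ b, 0 ≤ x := fun x hx => spectrum_nonneg_of_nonneg hb hx
  have hc : ContinuousOn (fun x : ℝ => Real.sqrt (δ / (x + δ))) (spectrum ℝ b) := by
    refine Real.continuous_sqrt.comp_continuousOn (continuousOn_const.div (by fun_prop) ?_)
    intro x hx
    have := hsp x hx
    positivity
  have hsq : cfc (fun x : ℝ => Real.sqrt (δ / (x + δ))) b *
      cfc (fun x : ℝ => Real.sqrt (δ / (x + δ))) b = cfc (fun x : ℝ => δ / (x + δ)) b := by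
    rw [← cfc_mul _ _ b hc hc]
    refine cfc_congr fun x hx => ?_
    have := hsp x hx
    exact Real.mul_self_sqrt (by positivity)
  refine ⟨cfc (fun x : ℝ => Real.sqrt (δ / (x + δ))) b, cfc_predicate _ _, ?_, ?_⟩
  · rw [hsq]
    refine cfc_le_one _ _ fun x hx => ?_
    have := hsp x hx
    rw [div_le_one (by positivity)]
    linarith
  · have hc' : ContinuousOn (fun x : ℝ => δ / (x + δ)) (spectrum ℝ b) := by
      refine continuousOn_const.div (by fun_prop) fun x hx => ?_
      have := hsp x hx
      positivity
    rw [hsq]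
    nth_rewrite 2 [← cfc_id' ℝ b]
    rw [← cfc_mul _ _ b hc (by fun_prop),
      ← cfc_mul (fun x : ℝ => Real.sqrt (δ / (x + δ)) * x) _ b (hc.mul (by fun_prop)) hc,
      ← cfc_one ℝ b, ← cfc_sub _ _ b (by fun_prop) hc', ← cfc_smul δ _ b (by fun_prop)]
    refine cfc_congr fun x hx => ?_
    have h0 := hsp x hx
    have : Real.sqrt (δ / (x + δ)) * x * Real.sqrt (δ / (x + δ)) = δ / (x + δ) * x := by
      rw [mul_right_comm, Real.mul_self_sqrt (by positivity)]
    simp only [this, smul_eq_mul, Pi.one_apply]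
    field_simp
    ring

variable {B : Type*} [NonUnitalCStarAlgebra B] [PartialOrder B] [StarOrderedRing B]

lemma exists_norm_conj_sub_le {a b h : B} (ha : 0 ≤ a) (hb : 0 ≤ b) (hab : a ≤ b + h)
    {δ : ℝ} (hδ : 0 < δ) : ∃ w : B, ‖w * b * star w - a‖ ≤ δ + ‖h‖ := by
  have hh : IsSelfAdjoint h := by
    have := (IsSelfAdjoint.of_nonneg (sub_nonneg.2 hab)).sub (IsSelfAdjoint.of_nonneg hb)
    have := this.add (IsSelfAdjoint.of_nonneg ha)
    rwa [show b + h - a - b + a = h by abel] at this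
  obtain ⟨g, hg, hg1, hgb⟩ := exists_conj_eq_smul (Unitization.inr_nonneg_iff.2 hb) hδ
  set s : B := CFC.sqrt a
  have hs : IsSelfAdjoint s := .of_nonneg (CFC.sqrt_nonneg a)
  have hss : s * s = a := CFC.sqrt_mul_sqrt_self a
  have hU : (s : B⁺¹) * (s : B⁺¹) = a := by rw [← Unitization.inr_mul, hss]
  have hsU : star (s : B⁺¹) = s := by rw [← Unitization.inr_star, hs.star_eq]
  have hle : g * (a : B⁺¹) * g ≤ algebraMap ℝ B⁺¹ (δ + ‖h‖) := by
    have h1 : (a : B⁺¹) ≤ (b : B⁺¹) + (h : B⁺¹) := by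
      rw [← Unitization.inr_add, Unitization.inr_le_iff _ _ (.of_nonneg ha)
        ((IsSelfAdjoint.of_nonneg hb).add hh)]
      exact hab
    have hh' : (h : B⁺¹) ≤ algebraMap ℝ B⁺¹ ‖h‖ := by
      simpa [Unitization.norm_inr] using (hh.inr ℂ).le_algebraMap_norm_self
    calc g * (a : B⁺¹) * g ≤ g * ((b : B⁺¹) + algebraMap ℝ B⁺¹ ‖h‖) * g := by
          refine hg.conjugate_le_conjugate (h1.trans ?_)
          gcongr
      _ = δ • (1 - g * g) + ‖h‖ • (g * g) := by
          rw [mul_add, add_mul, hgb, Algebra.algebraMap_eq_smul_one]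
          simp
      _ ≤ δ • 1 + ‖h‖ • 1 := by
          refine add_le_add (smul_le_smul_of_nonneg_left ?_ hδ.le)
            (smul_le_smul_of_nonneg_left hg1 (norm_nonneg _))
          exact sub_le_self _ hg.mul_self_nonneg
      _ = _ := by rw [← add_smul, Algebra.algebraMap_eq_smul_one]
  have hnorm : ‖g * (a : B⁺¹) * g‖ ≤ δ + ‖h‖ :=
    (CStarAlgebra.norm_le_iff_le_algebraMap _ (by positivity)
      (hg.conjugate_nonneg (Unitization.inr_nonneg_iff.2 ha))).2 hle
  have hnorm' : ‖(s : B⁺¹) * (g * g) * s‖ ≤ δ + ‖h‖ := by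
    have e1 : (s : B⁺¹) * (g * g) * s = star (g * (s : B⁺¹)) * (g * s) := by
      simp [star_mul, hg.star_eq, hsU, mul_assoc]
    have e2 : g * (a : B⁺¹) * g = (g * (s : B⁺¹)) * star (g * s) := by
      simp [star_mul, hg.star_eq, hsU, mul_assoc, ← hU]
    rw [e1, CStarRing.norm_star_mul_self, ← CStarRing.norm_self_mul_star, ← e2]
    exact hnorm
  obtain ⟨w, hw⟩ : ∃ w : B, (w : B⁺¹) = (Real.sqrt δ)⁻¹ • ((s : B⁺¹) * g) :=
    ⟨_, (Unitization.eq_inr_of_fst_eq_zero (by simp)).symm⟩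
  have hδ' : (Real.sqrt δ)⁻¹ * ((Real.sqrt δ)⁻¹ * δ) = 1 := by
    rw [← mul_assoc, ← mul_inv, Real.mul_self_sqrt hδ.le, inv_mul_cancel₀ hδ.ne']
  refine ⟨w, ?_⟩
  have e3 : (s : B⁺¹) * g * b * (g * s) = δ • ((a : B⁺¹) - s * (g * g) * s) := by
    rw [show (s : B⁺¹) * g * b * (g * s) = s * (g * b * g) * s by simp only [mul_assoc], hgb]
    simp [mul_sub, sub_mul, hU]
  have e4 : ((w * b * star w - a : B) : B⁺¹) = -((s : B⁺¹) * (g * g) * s) := by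
    rw [Unitization.inr_sub, Unitization.inr_mul, Unitization.inr_mul, Unitization.inr_star, hw]
    simp only [star_smul, star_mul, hg.star_eq, hsU, smul_mul_assoc, mul_smul_comm, e3, smul_smul,
      star_trivial]
    rw [hδ']
    simp
  rw [← Unitization.norm_inr (𝕜 := ℂ), e4, norm_neg]
  exact hnorm'

lemma mem_conjClosure_of_le {a b : B} (ha : 0 ≤ a) (hab : a ≤ b) : a ∈ conjClosure b := by
  refine mem_conjClosure_of_forall_exists fun ε hε => ?_
  obtain ⟨w, hw⟩ := exists_norm_conj_sub_le (h := 0) ha (ha.trans hab) (by simpa using hab)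
    (half_pos hε)
  refine ⟨_, subset_closure ⟨w, rfl⟩, hw.trans_lt ?_⟩
  simpa using hε

end Order

section Full

variable {B : Type*} [NonUnitalCStarAlgebra B]

/-- The additive subgroup spanned by the products `r * b * s`. -/
def sandwichSpan (b : B) : AddSubgroup B :=
  AddSubgroup.closure {x : B | ∃ r s, x = r * b * s}

/-- The closed two-sided ideal generated by the products `r * b * s`. -/
def sandwichIdeal (b : B) : TwoSidedIdeal B :=
  TwoSidedIdeal.mk' ((sandwichSpan b).topologicalClosure : Set B) (zero_mem _)
    (fun hx hy => add_mem hx hy) (fun hx => neg_mem hx)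
    (fun {x y} hy => map_mem_closure (f := fun t => x * t) (by fun_prop) hy fun t ht => by
      induction ht using AddSubgroup.closure_induction with
      | mem t ht =>
        obtain ⟨r, s, rfl⟩ := ht
        exact AddSubgroup.subset_closure ⟨x * r, s, by simp [mul_assoc]⟩
      | zero => simp
      | add a c _ _ ha hc => simpa [mul_add] using add_mem ha hc
      | neg a _ ha => simpa using ha)
    (fun {x y} hx => map_mem_closure (f := fun t => t * y) (by fun_prop) hx fun t ht => by
      induction ht using AddSubgroup.closure_induction with
      | mem t ht =>
        obtain ⟨r, s, rfl⟩ := ht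
        exact AddSubgroup.subset_closure ⟨r, s * y, by simp [mul_assoc]⟩
      | zero => simp
      | add a c _ _ ha hc => simpa [add_mul] using add_mem ha hc
      | neg a _ ha => simpa using ha)

lemma coe_sandwichIdeal (b : B) :
    (sandwichIdeal b : Set B) = closure (sandwichSpan b : Set B) :=
  TwoSidedIdeal.coe_mk' ..

variable [PartialOrder B] [StarOrderedRing B]

lemma IsFullIn.mem_closure_sandwichSpan {b : B} (hb : IsFullIn b) (hb0 : 0 ≤ b) (x : B) :
    x ∈ closure (sandwichSpan b : Set B) := by
  rw [← coe_sandwichIdeal]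
  refine hb _ (by rw [coe_sandwichIdeal]; exact isClosed_closure) ?_ x
  rw [← SetLike.mem_coe, coe_sandwichIdeal]
  refine closure_mono ?_ (mem_conjClosure_of_le hb0 le_rfl)
  rintro _ ⟨u, rfl⟩
  exact AddSubgroup.subset_closure ⟨u, star u, rfl⟩

lemma ProperlyInfinite.triple_mem {b : B} (hb : ProperlyInfinite b) :
    ((b, b, 0) : B × B × B) ∈ closure (conjTriples b) :=
  (cuntzSubequiv_diagonal_iff b (.of_nonneg hb.2.1)).1 hb.2.2

lemma exists_le_of_mem_sandwichSpan {b c : B} (hb : ProperlyInfinite b)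
    (hc : c ∈ sandwichSpan b) :
    ∃ d ∈ conjClosure b, c + star c ≤ d ∧ -(c + star c) ≤ d := by
  have hsa := IsSelfAdjoint.of_nonneg hb.2.1
  have hadd {x y : B} (hx : x ∈ conjClosure b) (hy : y ∈ conjClosure b) :=
    add_mem_conjClosure hsa hb.triple_mem hx hy
  induction hc using AddSubgroup.closure_induction with
  | mem c hc =>
    obtain ⟨r, s, rfl⟩ := hc
    refine ⟨r * b * star r + star s * b * star (star s),
      hadd (subset_closure ⟨r, rfl⟩) (subset_closure ⟨star s, rfl⟩), ?_, ?_⟩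
    · rw [← sub_nonneg]
      convert star_right_conjugate_nonneg hb.2.1 (r - star s) using 1
      simp only [star_sub, star_mul, star_star, hsa.star_eq, sub_mul, mul_sub, mul_assoc]
      abel
    · rw [← sub_nonneg]
      convert star_right_conjugate_nonneg hb.2.1 (r + star s) using 1
      simp only [star_add, star_mul, star_star, hsa.star_eq, add_mul, mul_add, mul_assoc]
      abel
  | zero => exact ⟨0, subset_closure ⟨0, by simp⟩, by simp, by simp⟩
  | add x y _ _ hx hy =>
    obtain ⟨d, hd, h1, h2⟩ := hx
    obtain ⟨e, he, h3, h4⟩ := hy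
    refine ⟨d + e, hadd hd he, ?_, ?_⟩
    · convert add_le_add h1 h3 using 1
      rw [star_add]; abel
    · convert add_le_add h2 h4 using 1
      rw [star_add]; abel
  | neg x _ hx =>
    obtain ⟨d, hd, h1, h2⟩ := hx
    refine ⟨d, hd, ?_, ?_⟩
    · convert h2 using 1
      rw [star_neg]; abel
    · convert h1 using 1
      rw [star_neg]; abel

lemma nonneg_of_mem_conjClosure {b d : B} (hb : 0 ≤ b) (hd : d ∈ conjClosure b) : 0 ≤ d := by
  refine closure_minimal ?_ CStarAlgebra.isClosed_nonneg hd
  rintro _ ⟨u, rfl⟩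
  exact star_right_conjugate_nonneg hb u

/-- Every positive element is Cuntz subequivalent to a full properly infinite one. -/
lemma mem_conjClosure_of_isFullIn {b a : B} (hf : IsFullIn b) (hb : ProperlyInfinite b)
    (ha : 0 ≤ a) : a ∈ conjClosure b := by
  suffices h : (2 : ℝ) • a ∈ conjClosure b by
    simpa [smul_smul] using smul_mem_conjClosure h (r := 2⁻¹) (by norm_num)
  refine mem_conjClosure_of_forall_exists fun ε hε => ?_
  obtain ⟨c, hc, hac⟩ := Metric.mem_closure_iff.1 (hf.mem_closure_sandwichSpan hb.2.1 a) (ε / 4)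
    (by positivity)
  obtain ⟨d, hd, hcd, -⟩ := exists_le_of_mem_sandwichSpan hb hc
  rw [dist_eq_norm] at hac
  have hh : ‖(a - c) + star (a - c)‖ < ε / 2 := by
    refine (norm_add_le _ _).trans_lt ?_
    rw [norm_star]
    linarith
  have hle : (2 : ℝ) • a ≤ d + ((a - c) + star (a - c)) := by
    have h0 := add_le_add_left hcd ((a - c) + star (a - c))
    convert h0 using 1
    rw [star_sub, (IsSelfAdjoint.of_nonneg ha).star_eq, two_smul]
    abel
  obtain ⟨w, hw⟩ := exists_norm_conj_sub_le (smul_nonneg zero_le_two ha)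
    (nonneg_of_mem_conjClosure hb.2.1 hd) hle (half_pos hε)
  exact ⟨_, conj_mem_conjClosure hd w, by linarith⟩

/-- A positive element dominating a full properly infinite element in the Cuntz preorder is
itself full and properly infinite. -/
lemma isFullIn_and_properlyInfinite_of_mem_conjClosure {b p : B} (hf : IsFullIn b)
    (hb : ProperlyInfinite b) (hp : 0 ≤ p) (hbp : b ∈ conjClosure p) :
    IsFullIn p ∧ ProperlyInfinite p := by
  refine ⟨fun J hJ hpJ => hf J hJ ?_, ?_, hp, ?_⟩
  · refine closure_minimal ?_ hJ hbp
    rintro _ ⟨u, rfl⟩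
    exact J.mul_mem_right _ _ (J.mul_mem_left _ _ hpJ)
  · rintro rfl
    refine hb.1 ?_
    simpa [conjClosure] using hbp
  · rw [cuntzSubequiv_diagonal_iff _ (.of_nonneg hp)]
    exact closure_conjTriples_subset hbp
      (triple_mem_of_mem_conjClosure hb.triple_mem (mem_conjClosure_of_isFullIn hf hb hp))

lemma IsProjection.nonneg {p : B} (hp : IsProjection p) : 0 ≤ p := by
  have := star_mul_self_nonneg p
  rwa [hp.1, hp.2] at this

lemma IsProjection.mem_conjClosure_of_mem_herSub {p a : B} (hp : IsProjection p) (ha : 0 ≤ a)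
    (hpa : p ∈ herSub Set.univ a) : p ∈ conjClosure a := by
  rw [← hp.2]
  nth_rewrite 2 [← hp.1]
  refine map_mem_closure (f := fun x => x * star x) (by fun_prop) hpa ?_
  rintro _ ⟨b, -, rfl⟩
  obtain ⟨s, hs, rfl⟩ : ∃ s : B, IsSelfAdjoint s ∧ s * s = a :=
    ⟨_, .of_nonneg (CFC.sqrt_nonneg a), CFC.sqrt_mul_sqrt_self a⟩
  exact ⟨s * s * b * s, by simp only [star_mul, hs.star_eq, mul_assoc]⟩

end Full

section Projection

open scoped CStarAlgebra

/-- The continuous ramp with value `0` for `t ≤ c` and value `1` for `t ≥ c + r`. -/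
noncomputable def ramp (c r t : ℝ) : ℝ := max 0 (min 1 ((t - c) / r))

lemma continuous_ramp (c r : ℝ) : Continuous (ramp c r) := by
  unfold ramp
  fun_prop

lemma ramp_mem_Icc (c r t : ℝ) : ramp c r t ∈ Set.Icc (0 : ℝ) 1 :=
  ⟨le_max_left _ _, max_le zero_le_one (min_le_left _ _)⟩

lemma ramp_of_le {c r t : ℝ} (hr : 0 < r) (ht : t ≤ c) : ramp c r t = 0 :=
  max_eq_left ((min_le_right _ _).trans (div_nonpos_of_nonpos_of_nonneg (by linarith) hr.le))

lemma ramp_of_ge {c r t : ℝ} (hr : 0 < r) (ht : c + r ≤ t) : ramp c r t = 1 := by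
  have : 1 ≤ (t - c) / r := by rw [one_le_div hr]; linarith
  rw [ramp, min_eq_left this, max_eq_right zero_le_one]

/-- Elements `s`, `f`, `l` obtained from `a` by functional calculus such that `f` is a unit for `s`,
`l` is a unit for `f`, and `l` factors through `a`. -/
lemma exists_staircase {B : Type*} [NonUnitalCStarAlgebra B] [PartialOrder B] [StarOrderedRing B]
    (A : NonUnitalStarSubalgebra ℂ B) (hAc : IsClosed (A : Set B)) {a : B} (haA : a ∈ A)
    (ha : 0 ≤ a) (ha0 : a ≠ 0) :
    ∃ s f l k : B, s ∈ A ∧ IsSelfAdjoint s ∧ s ≠ 0 ∧ IsSelfAdjoint f ∧ ‖f‖ ≤ 1 ∧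
      ‖f - f * f‖ ≤ 1 / 4 ∧ 0 ≤ l ∧ f * s = s ∧ l * f = f ∧ l = a * k ∧ l = k * a := by
  set r : ℝ := ‖a‖ / 4 with hr_def
  have hr : 0 < r := by have := norm_pos_iff.2 ha0; positivity
  have hsa : IsSelfAdjoint a := .of_nonneg ha
  have hc := continuous_ramp
  have h0 {c : ℝ} (hc : 0 ≤ c) : ramp c r 0 = 0 := ramp_of_le hr hc
  have hz1 : ramp r r 0 = 0 := h0 hr.le
  have hz2 : ramp (2 * r) r 0 = 0 := h0 (by positivity)
  have hz3 : ramp (3 * r) r 0 = 0 := h0 (by positivity)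
  have hmul {c d : ℝ} (hd : 0 ≤ d) (hcd : d + r ≤ c) :
      cfcₙ (ramp d r) a * cfcₙ (ramp c r) a = cfcₙ (ramp c r) a := by
    rw [← cfcₙ_mul _ _ a (hc d r).continuousOn (h0 hd) (hc c r).continuousOn
      (h0 (by linarith))]
    refine cfcₙ_congr fun t _ => ?_
    rcases le_total t c with ht | ht
    · simp [ramp_of_le hr ht]
    · simp [ramp_of_ge hr (hcd.trans ht)]
  set K : ℝ → ℝ := fun t => ramp r r t / max t r
  have hKc : Continuous K :=
    (hc r r).div (by fun_prop) fun t => (lt_max_of_lt_right hr).ne'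
  have hK0 : K 0 = 0 := by simp [K, hz1]
  have hKt (t : ℝ) : t * K t = ramp r r t := by
    rcases le_total t r with ht | ht
    · simp [K, ramp_of_le hr ht]
    · have : 0 < t := hr.trans_le ht
      simp only [K, max_eq_left ht]
      field_simp
  refine ⟨cfcₙ (ramp (3 * r) r) a, cfcₙ (ramp (2 * r) r) a, cfcₙ (ramp r r) a, cfcₙ K a,
    ?_, cfcₙ_predicate _ _, ?_, cfcₙ_predicate _ _, ?_, ?_, ?_, hmul (by positivity) (by linarith),
    hmul hr.le (by linarith), ?_, ?_⟩
  · exact cfcₙ_mem (𝕜' := ℂ) (hs := hAc) (ramp (3 * r) r) haA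
  · intro h
    have hn : ‖a‖ ∈ quasispectrum ℝ a := by
      rw [Unitization.quasispectrum_eq_spectrum_inr' ℝ ℂ, ← Unitization.norm_inr (𝕜 := ℂ)]
      exact CStarAlgebra.norm_mem_spectrum_of_nonneg (Unitization.inr_nonneg_iff.2 ha)
    have := norm_apply_le_norm_cfcₙ (ramp (3 * r) r) a hn (hc _ _).continuousOn hz3 hsa
    rw [h, ramp_of_ge hr (by rw [hr_def]; linarith)] at this
    norm_num at this
  · refine norm_cfcₙ_le fun t _ => ?_
    obtain ⟨h1, h2⟩ := ramp_mem_Icc (2 * r) r t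
    rwa [Real.norm_of_nonneg h1]
  · rw [← cfcₙ_mul _ _ a (hc _ r).continuousOn hz2 (hc _ r).continuousOn hz2,
      ← cfcₙ_sub _ (fun t => ramp (2 * r) r t * ramp (2 * r) r t) a (hc _ r).continuousOn hz2
        ((hc _ r).mul (hc _ r)).continuousOn (by simp [hz2])]
    refine norm_cfcₙ_le fun t _ => ?_
    obtain ⟨h1, h2⟩ := ramp_mem_Icc (2 * r) r t
    rw [Real.norm_of_nonneg (by nlinarith)]
    nlinarith [sq_nonneg (ramp (2 * r) r t - 1 / 2)]
  · exact cfcₙ_nonneg fun t _ => (ramp_mem_Icc r r t).1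
  · nth_rewrite 2 [← cfcₙ_id' ℝ a]
    rw [← cfcₙ_mul _ _ a (by fun_prop) rfl hKc.continuousOn hK0]
    exact cfcₙ_congr fun t _ => (hKt t).symm
  · nth_rewrite 3 [← cfcₙ_id' ℝ a]
    rw [← cfcₙ_mul _ _ a hKc.continuousOn hK0 (by fun_prop) rfl]
    exact cfcₙ_congr fun t _ => by simp only [mul_comm (K t), hKt]

/-- If `v` is close to an isometry, then `star v * v` has a self-adjoint inverse of norm at most
`4`. -/
lemma exists_inverse_star_mul_self {U : Type*} [CStarAlgebra U] [Nontrivial U] {v : U}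
    (hv : ‖1 - star v * v‖ ≤ 3 / 4) :
    ∃ R : U, IsSelfAdjoint R ∧ R * (star v * v) = 1 ∧ ‖R‖ ≤ 4 := by
  obtain ⟨T, hT⟩ : IsUnit (star v * v) := by
    have := isUnit_one_sub_of_norm_lt_one (hv.trans_lt (by norm_num))
    rwa [sub_sub_cancel] at this
  have hTs : IsSelfAdjoint (T : U) := hT ▸ IsSelfAdjoint.star_mul_self v
  have hsa : star T = T := Units.ext hTs
  refine ⟨(T⁻¹ : Uˣ), ?_, by rw [← hT, Units.inv_mul], ?_⟩
  · rw [IsSelfAdjoint, ← Units.coe_star, star_inv, hsa]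
  · have h1 : ((T⁻¹ : Uˣ) : U) = 1 + (1 - star v * v) * (T⁻¹ : Uˣ) := by
      rw [← hT, sub_mul, Units.mul_inv]
      simp
    have h2 : ‖((T⁻¹ : Uˣ) : U)‖ ≤ 1 + 3 / 4 * ‖((T⁻¹ : Uˣ) : U)‖ := by
      nth_rewrite 1 [h1]
      refine (norm_add_le _ _).trans <| add_le_add (by simp) <| (norm_mul_le _ _).trans ?_
      gcongr
    linarith

variable {B : Type*} [NonUnitalCStarAlgebra B] [PartialOrder B] [StarOrderedRing B]

/-- The complement of the range of an almost isometry `1 - f + s u* f` is a projection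
dominating `s` up to a compression, provided the row `(u, w)` almost turns `s * s` into
`diag(l, l)`. -/
lemma exists_projection_of_staircase {s f l u w : B} (hs : IsSelfAdjoint s)
    (hf : IsSelfAdjoint f) (hf1 : ‖f‖ ≤ 1) (hff : ‖f - f * f‖ ≤ 1 / 4) (hl : IsSelfAdjoint l)
    (hfs : f * s = s) (hlf : l * f = f)
    (hu : ‖u * (s * s) * star u - l‖ ≤ 1 / 16) (hw : ‖w * (s * s) * star w - l‖ ≤ 1 / 16)
    (huw : ‖u * (s * s) * star w‖ ≤ 1 / 16) :
    ∃ p : B, IsProjection p ∧ l * p * l = p ∧ s * s ∈ conjClosure p := by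
  have hsf : s * f = s := by simpa [hs.star_eq, hf.star_eq] using congrArg star hfs
  have hfl : f * l = f := by simpa [hl.star_eq, hf.star_eq] using congrArg star hlf
  have hls : l * s = s := by rw [← hfs, ← mul_assoc, hlf]
  have hsl : s * l = s := by simpa [hs.star_eq, hl.star_eq] using congrArg star hls
  set v : B⁺¹ := 1 - (f : B⁺¹) + ((s * star u * f : B) : B⁺¹) with hv_def
  have hsv : star v = 1 - (f : B⁺¹) + ((f * u * s : B) : B⁺¹) := by
    simp [hv_def, ← Unitization.inr_star, hs.star_eq, hf.star_eq, mul_assoc]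
  have hvv : 1 - star v * v =
      (((f - f * f) + (f - f * f) - f * (u * (s * s) * star u - l) * f : B) : B⁺¹) := by
    have e1 : f * (u * (s * s) * star u - l) * f = f * u * s * (s * star u * f) - f * f := by
      rw [mul_sub, sub_mul, hfl]
      simp only [mul_assoc]
    have e2 : f * (s * star u * f) = s * star u * f := by simp only [← mul_assoc, hfs]
    have e3 : f * u * s * f = f * u * s := by rw [mul_assoc, hsf]
    rw [hsv, hv_def, e1]
    have c2 : (f : B⁺¹) * ((s * star u * f : B) : B⁺¹) = ((s * star u * f : B) : B⁺¹) := by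
      rw [← Unitization.inr_mul, e2]
    have c3 : ((f * u * s : B) : B⁺¹) * (f : B⁺¹) = ((f * u * s : B) : B⁺¹) := by
      rw [← Unitization.inr_mul, e3]
    simp only [Unitization.inr_sub, Unitization.inr_add, Unitization.inr_mul _ (f * u * s),
      Unitization.inr_mul _ f f]
    simp only [mul_add, add_mul, mul_sub, sub_mul, mul_one, one_mul, c2, c3]
    abel
  have hvn : ‖1 - star v * v‖ ≤ 3 / 4 := by
    rw [hvv, Unitization.norm_inr]
    have h1 : ‖f * (u * (s * s) * star u - l) * f‖ ≤ 1 * (1 / 16) * 1 :=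
      (norm_mul_le _ _).trans (mul_le_mul ((norm_mul_le _ _).trans
        (mul_le_mul hf1 hu (norm_nonneg _) zero_le_one)) hf1 (norm_nonneg _) (by norm_num))
    have h2 := norm_sub_le ((f - f * f) + (f - f * f)) (f * (u * (s * s) * star u - l) * f)
    have h3 := norm_add_le (f - f * f) (f - f * f)
    linarith
  obtain ⟨R, hR, hR1, hRn⟩ := exists_inverse_star_mul_self hvn
  set P : B⁺¹ := 1 - v * R * star v with hP_def
  have hPs : star P = P := by simp [hP_def, hR.star_eq, mul_assoc]
  have hPP : P * P = P := by
    have : v * R * star v * (v * R * star v) = v * R * star v := by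
      rw [show v * R * star v * (v * R * star v) = v * (R * (star v * v)) * R * star v by
        simp only [mul_assoc], hR1, mul_one]
    rw [hP_def, sub_mul, mul_sub (v * R * star v), this]
    simp
  have hPl : P * (l : B⁺¹) = P := by
    have cfl : (f : B⁺¹) * l = f := by rw [← Unitization.inr_mul, hfl]
    have h1 : v * (1 - (l : B⁺¹)) = 1 - l := by
      have : ((s * star u * f : B) : B⁺¹) * l = ((s * star u * f : B) : B⁺¹) := by
        rw [← Unitization.inr_mul, mul_assoc, hfl]
      simp only [hv_def, mul_sub, add_mul, sub_mul, mul_one, one_mul, cfl, this]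
      abel
    have h2 : star v * (1 - (l : B⁺¹)) = 1 - l := by
      have : ((f * u * s : B) : B⁺¹) * l = ((f * u * s : B) : B⁺¹) := by
        rw [← Unitization.inr_mul, mul_assoc, hsl]
      simp only [hsv, mul_sub, add_mul, sub_mul, mul_one, one_mul, cfl, this]
      abel
    have h3 : R * (1 - (l : B⁺¹)) = 1 - l := by
      calc R * (1 - (l : B⁺¹)) = R * (star v * v) * (1 - (l : B⁺¹)) := by
            rw [mul_assoc, mul_assoc, h1, h2]
        _ = _ := by rw [hR1, one_mul]
    have h4 : P * (1 - (l : B⁺¹)) = 0 := by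
      rw [hP_def, sub_mul, mul_assoc, mul_assoc, h2, h3, h1, one_mul, sub_self]
    rw [mul_sub, mul_one, sub_eq_zero] at h4
    exact h4.symm
  have hlP : (l : B⁺¹) * P = P := by
    simpa [hPs, ← Unitization.inr_star, hl.star_eq] using congrArg star hPl
  obtain ⟨p, hp⟩ : ∃ p : B, (p : B⁺¹) = P := by
    refine ⟨_, (Unitization.eq_inr_of_fst_eq_zero ?_).symm⟩
    rw [← hPl]
    simp
  have hinj := Unitization.inr_injective (R := ℂ) (A := B)
  have hpp : IsProjection p :=
    ⟨hinj (by rw [Unitization.inr_star, hp, hPs]), hinj (by rw [Unitization.inr_mul, hp, hPP])⟩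
  refine ⟨p, hpp, hinj (by simp only [Unitization.inr_mul, hp, hlP, hPl]), ?_⟩
  have hvy : star v * ((s * star w : B) : B⁺¹) = ((f * (u * (s * s) * star w) : B) : B⁺¹) := by
    have c1 : (f : B⁺¹) * ((s * star w : B) : B⁺¹) = ((s * star w : B) : B⁺¹) := by
      rw [← Unitization.inr_mul, ← mul_assoc, hfs]
    have c2 : ((f * u * s : B) : B⁺¹) * ((s * star w : B) : B⁺¹) =
        ((f * (u * (s * s) * star w) : B) : B⁺¹) := by
      rw [← Unitization.inr_mul]
      simp only [mul_assoc]
    rw [hsv, add_mul, sub_mul, one_mul, c1, c2, sub_self, zero_add]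
  set z : B⁺¹ := ((f * (u * (s * s) * star w) : B) : B⁺¹) with hz_def
  have hz : ‖z‖ ≤ 1 / 16 := by
    rw [hz_def, Unitization.norm_inr]
    simpa using (norm_mul_le _ _).trans (mul_le_mul hf1 huw (norm_nonneg _) zero_le_one)
  have hyv : ((w * s : B) : B⁺¹) * v = star z := by
    rw [← hvy]
    simp [← Unitization.inr_star, hs.star_eq]
  have hyPy : ((w * s * p * (s * star w) - w * (s * s) * star w : B) : B⁺¹) = -(star z * R * z) := by
    have : ((w * s : B) : B⁺¹) * (v * R * star v) * ((s * star w : B) : B⁺¹) = star z * R * z := by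
      rw [← hyv, ← hvy]
      simp only [mul_assoc]
    rw [Unitization.inr_sub, Unitization.inr_mul _ (w * s * p), Unitization.inr_mul _ (w * s), hp,
      hP_def, mul_sub, sub_mul, this, mul_one, ← Unitization.inr_mul,
      show w * s * (s * star w) = w * (s * s) * star w by simp only [mul_assoc]]
    abel
  have hnorm : ‖w * s * p * (s * star w) - w * (s * s) * star w‖ ≤ 1 / 16 * 4 * (1 / 16) := by
    rw [← Unitization.norm_inr (𝕜 := ℂ), hyPy, norm_neg]
    exact (norm_mul_le _ _).trans (mul_le_mul ((norm_mul_le _ _).trans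
        (mul_le_mul (by rwa [norm_star]) hRn (norm_nonneg _) (by norm_num))) hz (norm_nonneg _)
        (by norm_num))
  set e : B := l - w * s * p * (s * star w) with he_def
  have hen : ‖e‖ ≤ 1 / 4 := by
    have h1 := norm_add_le (w * s * p * (s * star w) - w * (s * s) * star w)
      (w * (s * s) * star w - l)
    rw [sub_add_sub_cancel, norm_sub_rev] at h1
    linarith
  have hes : IsSelfAdjoint e := by
    simp [IsSelfAdjoint, he_def, hl.star_eq, hs.star_eq, hpp.1, mul_assoc]
  have hss : 0 ≤ s * s := hs.mul_self_nonneg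
  have hle : (3 / 4 : ℝ) • (s * s) ≤ s * w * s * p * star (s * w * s) := by
    have h1 : s * e * s ≤ (1 / 4 : ℝ) • (s * s) := by
      have := CStarAlgebra.star_left_conjugate_le_norm_smul (a := s) hes
      rw [hs.star_eq] at this
      exact this.trans (smul_le_smul_of_nonneg_right hen hss)
    have h2 : s * e * s = s * s - s * w * s * p * star (s * w * s) := by
      rw [he_def, mul_sub, sub_mul, hsl]
      simp only [star_mul, hs.star_eq, mul_assoc]
    rw [h2, sub_le_iff_le_add', ← sub_le_iff_le_add] at h1
    convert h1 using 1
    module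
  have hmem : (3 / 4 : ℝ) • (s * s) ∈ conjClosure p :=
    conjClosure_subset (subset_closure ⟨_, rfl⟩)
      (mem_conjClosure_of_le (smul_nonneg (by norm_num) hss) hle)
  simpa [smul_smul] using smul_mem_conjClosure hmem (r := 4 / 3) (by norm_num)

end Projection

theorem stmt19 {B : Type*} [NonUnitalCStarAlgebra B] [PartialOrder B] [StarOrderedRing B]
    (A : NonUnitalStarSubalgebra ℂ B) (hAc : IsClosed (A : Set B)) :
    (∀ a ∈ A, 0 ≤ a → a ≠ 0 → IsFullIn a ∧ ProperlyInfinite a) ↔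
      (∀ a ∈ A, 0 ≤ a → a ≠ 0 →
        ∃ p ∈ herSub (Set.univ : Set B) a,
          IsProjection p ∧ IsFullIn p ∧ ProperlyInfinite p) := by
  constructor
  · intro h a haA ha ha0
    obtain ⟨s, f, l, k, hsA, hs, hs0, hf, hf1, hff, hl, hfs, hlf, hak, hka⟩ :=
      exists_staircase A hAc haA ha ha0
    have hss0 : s * s ≠ 0 := by
      have := (CStarRing.star_mul_self_ne_zero_iff s).2 hs0
      rwa [hs.star_eq] at this
    obtain ⟨hfull, hpi⟩ := h (s * s) (mul_mem hsA hsA) hs.mul_self_nonneg hss0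
    have hlt := triple_mem_of_mem_conjClosure hpi.triple_mem
      (mem_conjClosure_of_isFullIn hfull hpi hl)
    obtain ⟨_, ⟨⟨u, w⟩, rfl⟩, huw⟩ :=
      Metric.mem_closure_iff.1 hlt (1 / 16) (by norm_num)
    rw [dist_eq_norm'] at huw
    simp only [Prod.norm_def, Prod.fst_sub, Prod.snd_sub, max_lt_iff, sub_zero] at huw
    obtain ⟨p, hp, hlp, hsp⟩ := exists_projection_of_staircase hs hf hf1 hff (.of_nonneg hl) hfs hlf
      huw.1.le huw.2.1.le huw.2.2.le
    refine ⟨p, subset_closure ⟨k * p * k, trivial, ?_⟩, hp,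
      isFullIn_and_properlyInfinite_of_mem_conjClosure hfull hpi hp.nonneg hsp⟩
    calc p = l * p * l := hlp.symm
      _ = a * k * p * (k * a) := by rw [← hak, ← hka]
      _ = a * (k * p * k) * a := by simp only [mul_assoc]
  · intro h a haA ha ha0
    obtain ⟨p, hpa, hp, hfull, hpi⟩ := h a haA ha ha0
    exact isFullIn_and_properlyInfinite_of_mem_conjClosure hfull hpi ha
      (hp.mem_conjClosure_of_mem_herSub ha hpa)
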